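/- Let n and k both be even with 0 < k < n, let m = ν₂(k) be the 2-adic valuation of k, and suppose ν₂(n) ≥ m and ν₂(k) − ν₂(r) ≤ 1 (where ν₂(0)=∞). Then |N_r(n,k)| − |S̄_r(n,k)| = ε · |N_r(n/2^m, k/2^m)|, where ε = −1 if ν₂(r) = m−1 and ε = +1 otherwise. -/

import Mathlib

open Finset

/-- Number of ones in a cyclic binary word of length `n`. -/
noncomputable def onesCount (n : ℕ) (w : ZMod n → Bool) : ℕ :=
  Nat.card {i : ZMod n // w i = true}

/-- The co-period of a cyclic binary word `w` of length `n`: the size of its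
stabilizer under cyclic rotation (equivalently, the `j` such that `w = v^j`
with `v` primitive). -/
noncomputable def coPeriod (n : ℕ) (w : ZMod n → Bool) : ℕ :=
  Nat.card {t : ZMod n // ∀ i, w (i + t) = w i}

/-- Two cyclic words are related iff they are cyclic rotations of each other. -/
def rotRel (n : ℕ) (u v : ZMod n → Bool) : Prop :=
  ∃ t : ZMod n, ∀ i, u i = v (i + t)

theorem rotRel_equivalence (n : ℕ) : Equivalence (rotRel n) := by
  constructor
  · exact fun u => ⟨0, fun i => by rw [add_zero]⟩
  · rintro u v ⟨t, h⟩
    exact ⟨-t, fun i => by rw [h, neg_add_cancel_right]⟩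
  · rintro u v w ⟨t1, h1⟩ ⟨t2, h2⟩
    exact ⟨t1 + t2, fun i => by rw [h1, h2, ← add_assoc]⟩

def rotSetoid (n : ℕ) : Setoid (ZMod n → Bool) := ⟨rotRel n, rotRel_equivalence n⟩

/-- The number of binary necklaces of length `n` with `k` ones. -/
noncomputable def NCard (n k : ℕ) : ℕ :=
  Nat.card (Quotient (Setoid.comap
    (Subtype.val : {w : ZMod n → Bool // onesCount n w = k} → _) (rotSetoid n)))

/-- The number of binary necklaces of length `n` with `k` ones whose co-period divides `r`. -/
noncomputable def NrCard (n k r : ℕ) : ℕ :=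
  Nat.card (Quotient (Setoid.comap
    (Subtype.val : {w : ZMod n → Bool // onesCount n w = k ∧ coPeriod n w ∣ r} → _)
    (rotSetoid n)))

/-- The number of `k`-element subsets of `{1,…,n}` whose elements sum to `r` mod `n`. -/
def SbarCard (n k r : ℕ) : ℕ :=
  ((Finset.Icc 1 n).powerset.filter
    (fun A => A.card = k ∧ (∑ a ∈ A, a) % n = r)).card

/-- The number of `k`-element subsets of `{1,…,n-1}` whose elements sum to `r` mod `n`. -/
def SCard (n k r : ℕ) : ℕ :=
  ((Finset.Icc 1 (n - 1)).powerset.filter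
    (fun A => A.card = k ∧ (∑ a ∈ A, a) % n = r)).card

/-- The Ramanujan sum `c_d(r) = ∑_{j ∣ gcd(r,d)} j · μ(d/j)`. -/
def ramanujanSum (d : ℕ) (r : ℤ) : ℤ :=
  ∑ j ∈ (Int.gcd r d).divisors, (j : ℤ) * ArithmeticFunction.moebius (d / j)

/-!
Write `c_d(r)` for the Ramanujan sum. Extracting the subsets with sum `r` mod `n` by a sum over
`n`-th roots of unity `z`, and evaluating `∏ₐ (1 + zᵃ x) = (1 - (-x)ᵈ)^(n/d)` for `z` of order `d`,
gives `n |S̄_r(n,k)| = ∑ (-1)^(k + k/d) c_d(r) C(n/d, k/d)`, the sum being over `d ∣ gcd(n,k)`.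
Since `∑_{d ∣ j} c_d(r) = j · [j ∣ r]`, Burnside's lemma gives the same formula without signs for
`n |N_r(n,k)|`: exactly `C(n/d, k/d)` words with `k` ones have co-period divisible by `d`.

For even `k` with `m = ν₂(k)`, the difference keeps twice the terms with `k/d` odd, that is, with
`d = 2^m e`. As `c_{2^m e}(r) = c_{2^m}(r) c_e(r)`, what remains is `2 c_{2^m}(r)` times the formula
for `(n/2^m) |N_r(n/2^m, k/2^m)|`, and `2 c_{2^m}(r)` is `2^m`, `-2^m` or `0`.
-/

section RamanujanSum

theorem filter_dvd_divisors_eq_divisors_gcd {n : ℕ} (hn : n ≠ 0) (k : ℕ) :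
    {d ∈ n.divisors | d ∣ k} = (n.gcd k).divisors := by
  ext d
  simp [Nat.dvd_gcd_iff, hn]

theorem sum_divisors_mul_filter_dvd {M : Type*} [AddCommMonoid M] {a : ℕ} (ha : a ≠ 0) (g : ℕ)
    (f : ℕ → M) : ∑ d ∈ (a * g).divisors with a ∣ d, f d = ∑ e ∈ g.divisors, f (a * e) := by
  have himage : {d ∈ (a * g).divisors | a ∣ d} = g.divisors.image (a * ·) := by
    ext d
    simp only [mem_filter, mem_image, Nat.mem_divisors, mul_ne_zero_iff]
    constructor
    · rintro ⟨⟨hd, -, hg⟩, e, rfl⟩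
      exact ⟨e, ⟨Nat.dvd_of_mul_dvd_mul_left (Nat.pos_of_ne_zero ha) hd, hg⟩, rfl⟩
    · rintro ⟨e, ⟨he, hg⟩, rfl⟩
      exact ⟨⟨mul_dvd_mul_left a he, ha, hg⟩, dvd_mul_right a e⟩
  rw [himage, sum_image fun x _ y _ h => Nat.eq_of_mul_eq_mul_left (Nat.pos_of_ne_zero ha) h]

/-- The arithmetic function `d ↦ d · [d ∣ r]`; its Dirichlet product with `μ` is `d ↦ c_d(r)`. -/
def divisorWeight (r : ℤ) : ArithmeticFunction ℤ := ⟨fun d => if (d : ℤ) ∣ r then d else 0, by simp⟩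

theorem divisorWeight_apply (r : ℤ) (d : ℕ) :
    divisorWeight r d = if (d : ℤ) ∣ r then (d : ℤ) else 0 := rfl

theorem isMultiplicative_divisorWeight (r : ℤ) : (divisorWeight r).IsMultiplicative := by
  refine ⟨by simp [divisorWeight_apply], fun {a b} hab => ?_⟩
  have hdvd : (a : ℤ) * b ∣ r ↔ (a : ℤ) ∣ r ∧ (b : ℤ) ∣ r :=
    ⟨fun h => ⟨dvd_of_mul_right_dvd h, dvd_of_mul_left_dvd h⟩,
      fun h => (Nat.isCoprime_iff_coprime.2 hab).mul_dvd h.1 h.2⟩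
  simp only [divisorWeight_apply, Nat.cast_mul, hdvd, ite_zero_mul_ite_zero]

theorem ramanujanSum_eq_divisorWeight_mul_moebius (d : ℕ) (r : ℤ) :
    ramanujanSum d r = (divisorWeight r * ArithmeticFunction.moebius) d := by
  rcases eq_or_ne d 0 with rfl | hd
  · simp [ramanujanSum]
  have hgcd : d.divisors.filter (fun j : ℕ => (j : ℤ) ∣ r) = (Int.gcd r d).divisors := by
    ext j
    simp [Int.dvd_gcd_iff, Int.natCast_dvd_natCast, hd, and_comm]
  rw [ArithmeticFunction.mul_apply, Nat.sum_divisorsAntidiagonal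
    fun i j => divisorWeight r i * ArithmeticFunction.moebius j, ramanujanSum, ← hgcd, sum_filter]
  simp only [divisorWeight_apply, ite_mul, zero_mul]

theorem ramanujanSum_neg (d : ℕ) (r : ℤ) : ramanujanSum d (-r) = ramanujanSum d r := by
  simp only [ramanujanSum, Int.neg_gcd]

theorem ramanujanSum_mul_of_coprime {a b : ℕ} (hab : a.Coprime b) (r : ℤ) :
    ramanujanSum (a * b) r = ramanujanSum a r * ramanujanSum b r := by
  simpa only [ramanujanSum_eq_divisorWeight_mul_moebius] using
    ((isMultiplicative_divisorWeight r).mul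
      ArithmeticFunction.isMultiplicative_moebius).map_mul_of_coprime hab

theorem sum_ramanujanSum_divisors (n : ℕ) (r : ℤ) :
    ∑ d ∈ n.divisors, ramanujanSum d r = if (n : ℤ) ∣ r then (n : ℤ) else 0 := by
  simp only [ramanujanSum_eq_divisorWeight_mul_moebius]
  rw [← ArithmeticFunction.coe_mul_zeta_apply, mul_assoc,
    ArithmeticFunction.moebius_mul_coe_zeta, mul_one, divisorWeight_apply]

theorem ramanujanSum_prime_pow_succ {p : ℕ} (hp : p.Prime) (m : ℕ) (r : ℤ) :
    ramanujanSum (p ^ (m + 1)) r =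
      (if (p : ℤ) ^ (m + 1) ∣ r then (p : ℤ) ^ (m + 1) else 0) -
        if (p : ℤ) ^ m ∣ r then (p : ℤ) ^ m else 0 := by
  have hsucc := sum_ramanujanSum_divisors (p ^ (m + 1)) r
  have hm := sum_ramanujanSum_divisors (p ^ m) r
  rw [Nat.sum_divisors_prime_pow hp] at hsucc hm
  rw [sum_range_succ, hm] at hsucc
  push_cast at hsucc
  linarith

end RamanujanSum

section RootsOfUnity

open Polynomial

theorem nthRootsFinset_eq_image_range_pow {R : Type*} [CommRing R] [IsDomain R] [DecidableEq R]
    {ζ : R} {n : ℕ} (hn : 0 < n) (hζ : IsPrimitiveRoot ζ n) :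
    nthRootsFinset n (1 : R) = (range n).image (ζ ^ ·) := by
  ext z
  rw [mem_nthRootsFinset hn, mem_image]
  constructor
  · intro hz
    have : NeZero n := ⟨hn.ne'⟩
    obtain ⟨i, hi, rfl⟩ := hζ.eq_pow_of_pow_eq_one hz
    exact ⟨i, mem_range.2 hi, rfl⟩
  · rintro ⟨i, -, rfl⟩
    rw [pow_right_comm, hζ.pow_eq_one, one_pow]

theorem sum_nthRootsFinset_zpow {K : Type*} [Field K] {ζ : K} {n : ℕ} (hn : 0 < n)
    (hζ : IsPrimitiveRoot ζ n) (r : ℤ) :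
    ∑ z ∈ nthRootsFinset n (1 : K), z ^ r = if (n : ℤ) ∣ r then (n : K) else 0 := by
  have hgeom : ∑ z ∈ nthRootsFinset n (1 : K), z ^ r = ∑ i ∈ range n, (ζ ^ r) ^ i := by
    classical
    rw [nthRootsFinset_eq_image_range_pow hn hζ,
      sum_image fun i hi j hj h => hζ.injOn_pow hi hj h]
    refine sum_congr rfl fun i _ => ?_
    rw [← zpow_natCast, ← zpow_natCast, ← zpow_mul, ← zpow_mul, mul_comm]
  rw [hgeom]
  split_ifs with h
  · simp [(hζ.zpow_eq_one_iff_dvd r).2 h]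
  · have hne : ζ ^ r ≠ 1 := mt (hζ.zpow_eq_one_iff_dvd r).1 h
    have hpow : (ζ ^ r) ^ n = 1 := by
      rw [← zpow_natCast, zpow_comm, zpow_natCast, hζ.pow_eq_one, one_zpow]
    rw [geom_sum_eq hne, hpow, sub_self, zero_div]

theorem sum_primitiveRoots_zpow {K : Type*} [Field K] {ζ : K} {n : ℕ} (hn : 0 < n)
    (hζ : IsPrimitiveRoot ζ n) (r : ℤ) :
    ∑ z ∈ primitiveRoots n K, z ^ r = ramanujanSum n r := by
  classical
  have hdivisors : ∀ d > 0, d ∈ {d | d ∣ n} →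
      ∑ i ∈ d.divisors, ∑ z ∈ primitiveRoots i K, z ^ r = (divisorWeight r d : K) := by
    intro d hd0 hd
    obtain ⟨e, rfl⟩ : d ∣ n := hd
    have hζe : IsPrimitiveRoot (ζ ^ e) d := hζ.pow hn (mul_comm d e)
    rw [← sum_biUnion fun i _ j _ hij => IsPrimitiveRoot.disjoint hij,
      ← IsPrimitiveRoot.nthRoots_one_eq_biUnion_primitiveRoots, sum_nthRootsFinset_zpow hd0 hζe,
      divisorWeight_apply, Int.cast_ite, Int.cast_natCast, Int.cast_zero]
  have hinversion := (ArithmeticFunction.sum_eq_iff_sum_mul_moebius_eq_on _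
    fun _ _ => dvd_trans).1 hdivisors n hn dvd_rfl
  rw [← hinversion, ramanujanSum_eq_divisorWeight_mul_moebius, mul_comm (divisorWeight r),
    ArithmeticFunction.mul_apply]
  push_cast
  rfl

theorem prod_range_mul_of_periodic {M : Type*} [CommMonoid M] {f : ℕ → M} {d : ℕ}
    (hf : Function.Periodic f d) (e : ℕ) :
    ∏ i ∈ range (d * e), f i = (∏ i ∈ range d, f i) ^ e := by
  induction e with
  | zero => simp
  | succ e ih =>
    rw [Nat.mul_succ, prod_range_add, ih, pow_succ]
    refine congrArg _ (prod_congr rfl fun i _ => ?_)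
    rw [add_comm, mul_comm]
    exact hf.nat_mul e i

theorem prod_Icc_one_eq_prod_range_of_periodic {M : Type*} [CommMonoid M] {f : ℕ → M} {n : ℕ}
    (hf : Function.Periodic f n) : ∏ i ∈ Icc 1 n, f i = ∏ i ∈ range n, f i := by
  cases n with
  | zero => rfl
  | succ m =>
    have hzero : f (m + 1) = f 0 := by simpa using hf 0
    rw [← Ico_add_one_right_eq_Icc, prod_Ico_eq_prod_range, prod_range_succ', Nat.add_sub_cancel,
      prod_range_succ, add_comm 1 m, hzero]
    simp only [add_comm 1]

theorem prod_one_add_C_pow_mul_X {R : Type*} [CommRing R] [IsDomain R] {ω : R} {d : ℕ} (hd : 0 < d)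
    (hω : IsPrimitiveRoot ω d) (e : ℕ) :
    ∏ a ∈ Icc 1 (d * e), (1 + C (ω ^ a) * X) = (1 - (-X : R[X]) ^ d) ^ e := by
  have hperiodic : Function.Periodic (fun a => 1 + C (ω ^ a) * (X : R[X])) d := fun a => by
    simp only [pow_add, hω.pow_eq_one, mul_one]
  classical
  have hωC : IsPrimitiveRoot (C ω : R[X]) d := hω.map_of_injective C_injective
  rw [prod_Icc_one_eq_prod_range_of_periodic (by simpa [mul_comm] using hperiodic.nat_mul e),
    prod_range_mul_of_periodic hperiodic]
  congr 1
  calc ∏ i ∈ range d, (1 + C (ω ^ i) * (X : R[X]))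
      = ∏ z ∈ nthRootsFinset d (1 : R[X]), (1 - z * -X) := by
        rw [nthRootsFinset_eq_image_range_pow hd hωC,
          prod_image fun i hi j hj h => hωC.injOn_pow hi hj h]
        simp only [C_pow, mul_neg, sub_neg_eq_add]
    _ = 1 - (-X) ^ d := by rw [← hωC.pow_sub_pow_eq_prod_sub_mul _ _ hd, one_pow]

theorem coeff_one_sub_neg_X_pow_pow {R : Type*} [CommRing R] {d : ℕ} (hd : 0 < d) (e k : ℕ) :
    ((1 - (-X : R[X]) ^ d) ^ e).coeff k =
      if d ∣ k then (-1) ^ (k + k / d) * (e.choose (k / d) : R) else 0 := by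
  have hexpand : (1 - (-X : R[X]) ^ d) ^ e =
      expand R d (((1 + X) ^ e).comp (C (-(-1) ^ d) * X)) := by
    simp [neg_pow (X : R[X]), sub_eq_add_neg]
  rw [hexpand, coeff_expand hd]
  refine if_ctx_congr Iff.rfl (fun hdk => ?_) fun _ => rfl
  obtain ⟨j, rfl⟩ := hdk
  rw [Nat.mul_div_cancel_left j hd, comp_C_mul_X_coeff, coeff_one_add_X_pow, neg_pow, ← pow_mul,
    ← pow_add, mul_comm, add_comm]

theorem sum_powersetCard_prod_pow {R : Type*} [CommRing R] [IsDomain R] {ω : R} {d n : ℕ}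
    (hd : 0 < d) (hdn : d ∣ n) (hω : IsPrimitiveRoot ω d) (k : ℕ) :
    ∑ A ∈ powersetCard k (Icc 1 n), ∏ a ∈ A, ω ^ a =
      if d ∣ k then (-1) ^ (k + k / d) * ((n / d).choose (k / d) : R) else 0 := by
  obtain ⟨e, rfl⟩ := hdn
  rw [Nat.mul_div_cancel_left e hd, ← coeff_one_sub_neg_X_pow_pow hd,
    ← prod_one_add_C_pow_mul_X hd hω, prod_one_add, finsetSum_coeff,
    powersetCard_eq_filter, sum_filter]
  refine sum_congr rfl fun A _ => ?_
  rw [prod_mul_distrib, prod_const, ← map_prod, coeff_C_mul_X_pow]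
  simp only [eq_comm]

end RootsOfUnity

section SubsetSums

open Polynomial

theorem mod_eq_iff_natCast_dvd_sub {n r : ℕ} (hr : r < n) (s : ℕ) :
    s % n = r ↔ (n : ℤ) ∣ s - r := by
  rw [← Nat.modEq_iff_dvd, Nat.ModEq, Nat.mod_eq_of_lt hr, eq_comm]

theorem SbarCard_eq_card {n r : ℕ} (hr : r < n) (k : ℕ) :
    SbarCard n k r = #{A ∈ powersetCard k (Icc 1 n) | (n : ℤ) ∣ (∑ a ∈ A, a : ℕ) - r} := by
  rw [SbarCard, ← filter_filter, ← powersetCard_eq_filter]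
  simp only [mod_eq_iff_natCast_dvd_sub hr]

theorem mul_SbarCard_eq_sum_nthRootsFinset {K : Type*} [Field K] {ζ : K} {n r : ℕ}
    (hζ : IsPrimitiveRoot ζ n) (hr : r < n) (k : ℕ) :
    (n : K) * SbarCard n k r = ∑ z ∈ nthRootsFinset n (1 : K), z ^ (-r : ℤ) *
      ∑ A ∈ powersetCard k (Icc 1 n), ∏ a ∈ A, z ^ a := by
  calc (n : K) * SbarCard n k r
      = ∑ A ∈ powersetCard k (Icc 1 n), ∑ z ∈ nthRootsFinset n (1 : K),
          z ^ (((∑ a ∈ A, a : ℕ) : ℤ) - r) := by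
        simp only [sum_nthRootsFinset_zpow (r.zero_le.trans_lt hr) hζ]
        rw [← sum_filter, sum_const, nsmul_eq_mul, ← SbarCard_eq_card hr, mul_comm]
    _ = _ := by
        rw [sum_comm]
        refine sum_congr rfl fun z hz => ?_
        have hz0 : z ≠ 0 := ne_zero_of_mem_nthRootsFinset one_ne_zero hz
        rw [mul_sum]
        refine sum_congr rfl fun A _ => ?_
        rw [prod_pow_eq_pow_sum, sub_eq_neg_add, zpow_add₀ hz0, zpow_natCast]

theorem mul_SbarCard_eq_sum_divisors {n r : ℕ} (hr : r < n) (k : ℕ) :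
    (n : ℤ) * SbarCard n k r = ∑ d ∈ (n.gcd k).divisors,
      ramanujanSum d r * ((-1) ^ (k + k / d) * (n / d).choose (k / d)) := by
  classical
  have hn : 0 < n := r.zero_le.trans_lt hr
  suffices h : (n : ℂ) * SbarCard n k r = ∑ d ∈ (n.gcd k).divisors,
      (ramanujanSum d r : ℂ) * ((-1) ^ (k + k / d) * (n / d).choose (k / d)) by
    exact_mod_cast h
  calc (n : ℂ) * SbarCard n k r
      = ∑ d ∈ n.divisors, ∑ z ∈ primitiveRoots d ℂ, z ^ (-r : ℤ) *
          ∑ A ∈ powersetCard k (Icc 1 n), ∏ a ∈ A, z ^ a := by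
        rw [mul_SbarCard_eq_sum_nthRootsFinset (Complex.isPrimitiveRoot_exp n hn.ne') hr,
          IsPrimitiveRoot.nthRoots_one_eq_biUnion_primitiveRoots,
          sum_biUnion fun i _ j _ hij => IsPrimitiveRoot.disjoint hij]
    _ = ∑ d ∈ n.divisors, (ramanujanSum d r : ℂ) *
          if d ∣ k then (-1) ^ (k + k / d) * ((n / d).choose (k / d) : ℂ) else 0 := by
        refine sum_congr rfl fun d hd => ?_
        have hdn : d ∣ n := Nat.dvd_of_mem_divisors hd
        have hd0 : 0 < d := Nat.pos_of_mem_divisors hd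
        rw [← ramanujanSum_neg,
          ← sum_primitiveRoots_zpow hd0 (Complex.isPrimitiveRoot_exp d hd0.ne'), sum_mul]
        exact sum_congr rfl fun z hz => by
          rw [sum_powersetCard_prod_pow hd0 hdn (isPrimitiveRoot_of_mem_primitiveRoots hz)]
    _ = _ := by
        rw [← filter_dvd_divisors_eq_divisors_gcd hn.ne', sum_filter]
        simp only [mul_ite, mul_zero]

end SubsetSums

section Periods

variable {G : Type*} [AddGroup G]

/-- The group of periods of a function `f` on `G`, that is, of the `t` with `f (x + t) = f x` for
all `x`. The co-period of a cyclic word is the order of its group of periods. -/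
def periodSubgroup {α : Type*} (f : G → α) : AddSubgroup G where
  carrier := {t | Function.Periodic f t}
  add_mem' := Function.Periodic.add_period
  zero_mem' := Function.periodic_with_period_zero f
  neg_mem' := Function.Periodic.neg

theorem periodSubgroup_comp_add_left {α : Type*} (f : G → α) (c : G) :
    periodSubgroup (fun x => f (c + x)) = periodSubgroup f := by
  ext t
  refine ⟨fun ht x => ?_, fun ht x => ?_⟩
  · simpa only [← add_assoc, add_neg_cancel, zero_add] using ht (-c + x)
  · simpa only [← add_assoc] using ht (c + x)

theorem leftRel_le_ker_iff {α : Type*} {H : AddSubgroup G} {f : G → α} :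
    QuotientAddGroup.leftRel H ≤ Setoid.ker f ↔ H ≤ periodSubgroup f := by
  constructor
  · intro h t ht x
    have hrel : QuotientAddGroup.leftRel H x (x + t) :=
      QuotientAddGroup.leftRel_apply.2 (by rwa [neg_add_cancel_left])
    exact (h hrel).symm
  · intro h x y hxy
    have := h (QuotientAddGroup.leftRel_apply.1 hxy) x
    rw [add_neg_cancel_left] at this
    exact this.symm

theorem card_subtype_card_true_eq {α : Type*} [Finite α] (j : ℕ) :
    Nat.card {v : α → Bool // Nat.card {a // v a = true} = j} = (Nat.card α).choose j := by
  classical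
  have := Fintype.ofFinite α
  let e : (α → Bool) ≃ Finset α :=
    { toFun v := {a | v a = true}
      invFun s a := decide (a ∈ s)
      left_inv v := by ext; simp
      right_inv s := by ext; simp }
  rw [Nat.card_congr (e.subtypeEquiv (q := fun s => #s = j) fun v => by
      rw [Nat.card_eq_fintype_card, Fintype.card_subtype]; rfl),
    Nat.card_eq_fintype_card, Fintype.card_finset_len, Nat.card_eq_fintype_card]

theorem card_true_comp_mk (H : AddSubgroup G) (v : G ⧸ H → Bool) :
    Nat.card {x : G // v x = true} = Nat.card H * Nat.card {a // v a = true} := by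
  rw [← Nat.card_prod]
  exact Nat.card_congr (QuotientAddGroup.preimageMkEquivAddSubgroupProdSet H {a | v a = true})

/-- Functions on `G` having every element of `H` as a period are functions on `G ⧸ H`. -/
def leftQuotientLiftEquiv (H : AddSubgroup G) (α : Type*) :
    {f : G → α // H ≤ periodSubgroup f} ≃ (G ⧸ H → α) :=
  (Equiv.subtypeEquivRight fun _ => leftRel_le_ker_iff.symm).trans
    (Setoid.liftEquiv (QuotientAddGroup.leftRel H))

theorem card_subtype_le_periodSubgroup_and_card_true_eq [Finite G] (H : AddSubgroup G) (k : ℕ) :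
    Nat.card {w : G → Bool // H ≤ periodSubgroup w ∧ Nat.card {x // w x = true} = k} =
      if Nat.card H ∣ k then H.index.choose (k / Nat.card H) else 0 := by
  have hlift : Nat.card {w : G → Bool // H ≤ periodSubgroup w ∧ Nat.card {x // w x = true} = k} =
      Nat.card {v : G ⧸ H → Bool // Nat.card H * Nat.card {a // v a = true} = k} :=
    Nat.card_congr <| (Equiv.subtypeSubtypeEquivSubtypeInter _ _).symm.trans <|
      (leftQuotientLiftEquiv H Bool).subtypeEquiv fun w =>
        (card_true_comp_mk H (leftQuotientLiftEquiv H Bool w)).congr_left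
  rw [hlift]
  split_ifs with hk
  · obtain ⟨j, rfl⟩ := hk
    have hH : 0 < Nat.card H := Nat.card_pos
    simp only [Nat.mul_right_inj hH.ne', Nat.mul_div_cancel_left j hH]
    exact card_subtype_card_true_eq j
  · have : IsEmpty {v : G ⧸ H → Bool // Nat.card H * Nat.card {a // v a = true} = k} :=
      ⟨fun v => hk (Dvd.intro _ v.2)⟩
    exact Nat.card_of_isEmpty

section Cyclic

variable {A : Type*} [AddCommGroup A] [IsAddCyclic A] [Finite A] {d : ℕ}

theorem card_ker_nsmulAddMonoidHom_of_dvd (hd : d ∣ Nat.card A) :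
    Nat.card (nsmulAddMonoidHom d : A →+ A).ker = d := by
  rw [IsAddCyclic.card_nsmulAddMonoidHom_ker, Nat.gcd_eq_right hd]

theorem dvd_card_iff_ker_nsmulAddMonoidHom_le (hd : d ∣ Nat.card A) (K : AddSubgroup A) :
    d ∣ Nat.card K ↔ (nsmulAddMonoidHom d : A →+ A).ker ≤ K := by
  have hcard : Nat.card (nsmulAddMonoidHom d : A →+ A).ker = d :=
    card_ker_nsmulAddMonoidHom_of_dvd hd
  constructor
  · intro hdK
    have hcardK : Nat.card ((nsmulAddMonoidHom d : K →+ K).ker.map K.subtype) = d := by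
      rw [AddSubgroup.card_map_of_injective K.subtype_injective,
        card_ker_nsmulAddMonoidHom_of_dvd hdK]
    have hle : (nsmulAddMonoidHom d : K →+ K).ker.map K.subtype ≤
        (nsmulAddMonoidHom d : A →+ A).ker := by
      rintro _ ⟨x, hx, rfl⟩
      exact congrArg K.subtype hx
    rw [← AddSubgroup.eq_of_le_of_card_ge hle (by rw [hcard, hcardK])]
    exact AddSubgroup.map_subtype_le _
  · intro hle
    rw [← hcard]
    exact AddSubgroup.card_dvd_of_le hle

theorem card_subtype_dvd_card_periodSubgroup_and_card_true_eq (hd : d ∣ Nat.card A) (k : ℕ) :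
    Nat.card {w : A → Bool // d ∣ Nat.card (periodSubgroup w) ∧ Nat.card {x // w x = true} = k} =
      if d ∣ k then (Nat.card A / d).choose (k / d) else 0 := by
  simp only [dvd_card_iff_ker_nsmulAddMonoidHom_le hd]
  rw [card_subtype_le_periodSubgroup_and_card_true_eq, card_ker_nsmulAddMonoidHom_of_dvd hd,
    IsAddCyclic.index_nsmulAddMonoidHom_ker, Nat.gcd_eq_right hd]

end Cyclic

end Periods

section Necklaces

theorem sum_card_stabilizer_eq_card_orbits_mul_card (M X : Type*) [AddGroup M]
    [AddAction M X] [Fintype X] [Finite M] :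
    ∑ x : X, Nat.card (AddAction.stabilizer M x) =
      Nat.card (Quotient (AddAction.orbitRel M X)) * Nat.card M := by
  rw [← Nat.card_prod, ← Nat.card_sigma]
  let swap : (Σ x : X, AddAction.stabilizer M x) ≃ Σ g : M, AddAction.fixedBy X g :=
    { toFun p := ⟨p.2.1, p.1, p.2.2⟩
      invFun p := ⟨p.2.1, p.1, p.2.2⟩ }
  exact Nat.card_congr (swap.trans (AddAction.sigmaFixedByEquivOrbitsProdAddGroup M X))

theorem card_stabilizer_eq_card_periodSubgroup {G α : Type*} [AddCommGroup G] (f : G → α) :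
    Nat.card (AddAction.stabilizer Gᵈᵃᵃ f) = Nat.card (periodSubgroup f) := by
  refine Nat.card_congr (DomAddAct.mk.symm.subtypeEquiv fun c => ?_)
  rw [AddAction.mem_stabilizer_iff, funext_iff]
  simp only [DomAddAct.vadd_apply, vadd_eq_add, add_comm]
  rfl

theorem coPeriod_eq_card_periodSubgroup {n : ℕ} (w : ZMod n → Bool) :
    coPeriod n w = Nat.card (periodSubgroup w) := rfl

/-- Words with `k` ones and co-period dividing `r`, as a subset of all words stable under rotation;
here `DomAddAct` makes `c` rotate `w` into `fun i => w (c + i)`. -/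
def necklaceWords (n k r : ℕ) : SubAddAction (ZMod n)ᵈᵃᵃ (ZMod n → Bool) where
  carrier := {w | onesCount n w = k ∧ coPeriod n w ∣ r}
  vadd_mem' := by
    rintro c w ⟨hk, hr⟩
    refine ⟨?_, ?_⟩
    · rw [← hk]
      exact Nat.card_congr ((Equiv.addLeft (DomAddAct.mk.symm c)).subtypeEquiv fun _ => Iff.rfl)
    · rw [coPeriod_eq_card_periodSubgroup] at hr ⊢
      rwa [← periodSubgroup_comp_add_left w (DomAddAct.mk.symm c)] at hr

theorem orbitRel_eq_rotSetoid (n : ℕ) :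
    AddAction.orbitRel (ZMod n)ᵈᵃᵃ (ZMod n → Bool) = rotSetoid n := by
  ext u v
  rw [AddAction.orbitRel_apply]
  refine DomAddAct.mk.symm.exists_congr fun c => ?_
  rw [eq_comm, funext_iff]
  simp only [DomAddAct.vadd_apply, vadd_eq_add, add_comm]

theorem NrCard_eq_card_orbitRel (n k r : ℕ) :
    NrCard n k r = Nat.card (Quotient (AddAction.orbitRel (ZMod n)ᵈᵃᵃ (necklaceWords n k r))) := by
  rw [SubAddAction.orbitRel_of_subAdd, orbitRel_eq_rotSetoid]
  rfl

open Classical in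
theorem mul_NrCard_eq_sum_coPeriod (n k r : ℕ) [NeZero n] :
    n * NrCard n k r =
      ∑ w : ZMod n → Bool with onesCount n w = k ∧ coPeriod n w ∣ r, coPeriod n w := by
  have hcard : Nat.card (ZMod n)ᵈᵃᵃ = n :=
    (Nat.card_congr DomAddAct.mk.symm).trans (Nat.card_zmod n)
  have : Finite (ZMod n)ᵈᵃᵃ := .of_equiv _ DomAddAct.mk
  have hsum := sum_card_stabilizer_eq_card_orbits_mul_card (ZMod n)ᵈᵃᵃ (necklaceWords n k r)
  rw [← NrCard_eq_card_orbitRel, hcard] at hsum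
  simp only [SubAddAction.stabilizer_of_subAdd, card_stabilizer_eq_card_periodSubgroup,
    ← coPeriod_eq_card_periodSubgroup] at hsum
  have hmem (w : ZMod n → Bool) : w ∈ ({w | onesCount n w = k ∧ coPeriod n w ∣ r} : Finset _) ↔
      w ∈ necklaceWords n k r := mem_filter_univ w
  rw [mul_comm, ← hsum, sum_subtype _ hmem]

theorem card_subtype_dvd_coPeriod_and_onesCount_eq {n d : ℕ} [NeZero n] (hd : d ∣ n) (k : ℕ) :
    Nat.card {w : ZMod n → Bool // d ∣ coPeriod n w ∧ onesCount n w = k} =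
      if d ∣ k then (n / d).choose (k / d) else 0 := by
  have h := card_subtype_dvd_card_periodSubgroup_and_card_true_eq
    ((Nat.card_zmod n).symm ▸ hd) k
  rwa [Nat.card_zmod] at h

theorem mul_NrCard_eq_sum_divisors (n k r : ℕ) [NeZero n] :
    (n : ℤ) * NrCard n k r =
      ∑ d ∈ (n.gcd k).divisors, ramanujanSum d r * (n / d).choose (k / d) := by
  classical
  have hcop (w : ZMod n → Bool) : coPeriod n w ∣ n := by
    simpa [coPeriod_eq_card_periodSubgroup] using
      AddSubgroup.card_addSubgroup_dvd_card (periodSubgroup w)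
  calc (n : ℤ) * NrCard n k r
      = ∑ w : ZMod n → Bool with onesCount n w = k,
          if (coPeriod n w : ℤ) ∣ r then (coPeriod n w : ℤ) else 0 := by
        rw [← Nat.cast_mul, mul_NrCard_eq_sum_coPeriod, ← filter_filter, sum_filter]
        push_cast [Int.natCast_dvd_natCast]
        rfl
    _ = ∑ w : ZMod n → Bool with onesCount n w = k,
          ∑ d ∈ n.divisors with d ∣ coPeriod n w, ramanujanSum d r := by
        refine sum_congr rfl fun w _ => ?_
        rw [← sum_ramanujanSum_divisors, filter_dvd_divisors_eq_divisors_gcd (NeZero.ne n),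
          Nat.gcd_eq_right (hcop w)]
    _ = ∑ d ∈ n.divisors, ∑ w : ZMod n → Bool with d ∣ coPeriod n w ∧ onesCount n w = k,
          ramanujanSum d r :=
        sum_comm' fun w d => by simp only [mem_filter, mem_univ, true_and]; tauto
    _ = ∑ d ∈ n.divisors, ramanujanSum d r *
          if d ∣ k then ((n / d).choose (k / d) : ℤ) else 0 := by
        refine sum_congr rfl fun d hd => ?_
        have h := card_subtype_dvd_coPeriod_and_onesCount_eq (Nat.dvd_of_mem_divisors hd) k
        rw [Nat.card_eq_fintype_card, Fintype.card_subtype] at h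
        rw [sum_const, h, nsmul_eq_mul, mul_comm]
        push_cast
        rfl
    _ = _ := by
        rw [← filter_dvd_divisors_eq_divisors_gcd (NeZero.ne n), sum_filter]
        simp only [mul_ite, mul_zero]

end Necklaces

section TwoAdic

theorem odd_div_iff_two_pow_dvd {m k d : ℕ} (hk : Odd k) (hd : d ∣ 2 ^ m * k) :
    Odd (2 ^ m * k / d) ↔ 2 ^ m ∣ d := by
  obtain ⟨c, hc⟩ := hd
  have hd0 : 0 < d := Nat.pos_of_ne_zero fun h => by
    simp [h, hk.pos.ne'] at hc
  rw [hc, Nat.mul_div_cancel_left c hd0]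
  constructor
  · intro hodd
    exact (Nat.Coprime.pow_left m (Nat.coprime_two_left.2 hodd)).dvd_of_dvd_mul_right
      (Dvd.intro k hc)
  · rintro ⟨e, rfl⟩
    rw [mul_assoc, Nat.mul_right_inj (by positivity)] at hc
    exact (Nat.odd_mul.1 (hc ▸ hk)).2

theorem one_sub_neg_one_pow_add_div {m k d : ℕ} (hm : m ≠ 0) (hk : Odd k) (hd : d ∣ 2 ^ m * k) :
    1 - (-1 : ℤ) ^ (2 ^ m * k + 2 ^ m * k / d) = if 2 ^ m ∣ d then 2 else 0 := by
  have heven : Even (2 ^ m * k) := (even_two.pow_of_ne_zero hm).mul_right k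
  rw [pow_add, heven.neg_one_pow, one_mul]
  split_ifs with hmd
  · rw [((odd_div_iff_two_pow_dvd hk hd).2 hmd).neg_one_pow]
    norm_num
  · have hdiv : Even (2 ^ m * k / d) :=
      Nat.not_odd_iff_even.1 (mt (odd_div_iff_two_pow_dvd hk hd).1 hmd)
    rw [hdiv.neg_one_pow, sub_self]

theorem mul_NrCard_sub_SbarCard {n r : ℕ} (hr : r < n) (k : ℕ) :
    (n : ℤ) * (NrCard n k r - SbarCard n k r) = ∑ d ∈ (n.gcd k).divisors,
      ramanujanSum d r * ((1 - (-1) ^ (k + k / d)) * (n / d).choose (k / d)) := by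
  have : NeZero n := ⟨(r.zero_le.trans_lt hr).ne'⟩
  rw [mul_sub, mul_NrCard_eq_sum_divisors, mul_SbarCard_eq_sum_divisors hr, ← sum_sub_distrib]
  exact sum_congr rfl fun _ _ => by ring

theorem two_pow_mul_NrCard_sub_SbarCard {m n k r : ℕ} (hm : m ≠ 0) (hk : Odd k)
    (hr : r < 2 ^ m * n) :
    (2 ^ m : ℤ) * (NrCard (2 ^ m * n) (2 ^ m * k) r - SbarCard (2 ^ m * n) (2 ^ m * k) r) =
      2 * ramanujanSum (2 ^ m) r * NrCard n k r := by
  have : NeZero n := ⟨right_ne_zero_of_mul (r.zero_le.trans_lt hr).ne'⟩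
  have hn : (n : ℤ) ≠ 0 := Nat.cast_ne_zero.2 (NeZero.ne n)
  refine mul_left_cancel₀ hn ?_
  calc (n : ℤ) * (2 ^ m * (NrCard (2 ^ m * n) (2 ^ m * k) r - SbarCard (2 ^ m * n) (2 ^ m * k) r))
      = ∑ d ∈ ((2 ^ m * n).gcd (2 ^ m * k)).divisors, ramanujanSum d r *
          ((1 - (-1) ^ (2 ^ m * k + 2 ^ m * k / d)) *
            (2 ^ m * n / d).choose (2 ^ m * k / d)) := by
        rw [← mul_NrCard_sub_SbarCard hr]
        push_cast
        ring
    _ = ∑ d ∈ (2 ^ m * n.gcd k).divisors with 2 ^ m ∣ d,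
          ramanujanSum d r * (2 * (2 ^ m * n / d).choose (2 ^ m * k / d)) := by
        rw [Nat.gcd_mul_left, sum_filter]
        refine sum_congr rfl fun d hd => ?_
        have hdk : d ∣ 2 ^ m * k :=
          (Nat.dvd_of_mem_divisors hd).trans (mul_dvd_mul_left _ (n.gcd_dvd_right k))
        simp only [one_sub_neg_one_pow_add_div hm hk hdk, ite_mul, zero_mul, mul_ite, mul_zero]
    _ = ∑ e ∈ (n.gcd k).divisors,
          2 * ramanujanSum (2 ^ m) r * (ramanujanSum e r * (n / e).choose (k / e)) := by
        rw [sum_divisors_mul_filter_dvd (by positivity)]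
        refine sum_congr rfl fun e he => ?_
        have hek : e ∣ k := (Nat.dvd_of_mem_divisors he).trans (n.gcd_dvd_right k)
        have hcop : (2 ^ m).Coprime e :=
          (Nat.coprime_two_left.2 (hk.of_dvd_nat hek)).pow_left m
        rw [ramanujanSum_mul_of_coprime hcop, Nat.mul_div_mul_left _ _ (by positivity),
          Nat.mul_div_mul_left _ _ (by positivity)]
        ring
    _ = n * (2 * ramanujanSum (2 ^ m) r * NrCard n k r) := by
        rw [← mul_sum, ← mul_NrCard_eq_sum_divisors]
        ring

theorem two_mul_ramanujanSum_two_pow {m : ℕ} (hm : m ≠ 0) (r : ℕ) :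
    2 * ramanujanSum (2 ^ m) r =
      2 ^ m * if 2 ^ m ∣ r then 1 else if 2 ^ (m - 1) ∣ r then -1 else 0 := by
  obtain ⟨m, rfl⟩ := Nat.exists_eq_succ_of_ne_zero hm
  have hcast (j : ℕ) : ((2 : ℕ) : ℤ) ^ j ∣ r ↔ 2 ^ j ∣ r := by
    rw [← Nat.cast_pow, Int.natCast_dvd_natCast]
  have hsucc : 2 ^ (m + 1) ∣ r → 2 ^ m ∣ r := (pow_dvd_pow 2 m.le_succ).trans
  rw [Nat.succ_eq_add_one, ramanujanSum_prime_pow_succ Nat.prime_two, Nat.add_sub_cancel]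
  simp only [hcast]
  split_ifs with h h' h'
  · push_cast; ring
  · exact absurd (hsucc h) h'
  · push_cast; ring
  · ring

theorem NrCard_sub_SbarCard_of_odd {m n k r : ℕ} (hm : m ≠ 0) (hk : Odd k) (hr : r < 2 ^ m * n) :
    (NrCard (2 ^ m * n) (2 ^ m * k) r : ℤ) - SbarCard (2 ^ m * n) (2 ^ m * k) r =
      (if 2 ^ m ∣ r then 1 else if 2 ^ (m - 1) ∣ r then -1 else 0) * NrCard n k r := by
  refine mul_left_cancel₀ (by positivity : (2 ^ m : ℤ) ≠ 0) ?_
  rw [two_pow_mul_NrCard_sub_SbarCard hm hk hr, two_mul_ramanujanSum_two_pow hm, mul_assoc]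

theorem ite_two_pow_dvd_eq_of_le_padicValNat_succ {m r : ℕ} (hm : m ≠ 0)
    (h : r = 0 ∨ m ≤ padicValNat 2 r + 1) :
    (if 2 ^ m ∣ r then 1 else if 2 ^ (m - 1) ∣ r then -1 else 0 : ℤ) =
      if r ≠ 0 ∧ padicValNat 2 r = m - 1 then -1 else 1 := by
  rcases eq_or_ne r 0 with rfl | hr
  · simp
  · simp only [padicValNat_dvd_iff_le hr]
    split_ifs <;> grind

end TwoAdic

theorem Nr_sub_Sbar_general (n k r : ℕ) (hr : r < n) (hk0 : 0 < k) (hke : Even k)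
    (hmn : padicValNat 2 k ≤ padicValNat 2 n) :
    (NrCard n k r : ℤ) - SbarCard n k r =
      (if 2 ^ padicValNat 2 k ∣ r then 1 else if 2 ^ (padicValNat 2 k - 1) ∣ r then -1 else 0) *
        NrCard (n / 2 ^ padicValNat 2 k) (k / 2 ^ padicValNat 2 k) r := by
  have hm : padicValNat 2 k ≠ 0 := (dvd_iff_padicValNat_ne_zero hk0.ne').1 hke.two_dvd
  have hn : n ≠ 0 := (r.zero_le.trans_lt hr).ne'
  have hn_eq : 2 ^ padicValNat 2 k * (n / 2 ^ padicValNat 2 k) = n :=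
    Nat.mul_div_cancel' ((padicValNat_dvd_iff_le (p := 2) hn).2 hmn)
  have hk_eq : 2 ^ padicValNat 2 k * (k / 2 ^ padicValNat 2 k) = k :=
    Nat.mul_div_cancel' pow_padicValNat_dvd
  have hodd : Odd (k / 2 ^ padicValNat 2 k) := by
    rw [← Nat.not_even_iff_odd, even_iff_two_dvd, Nat.dvd_div_iff_mul_dvd pow_padicValNat_dvd]
    exact pow_succ_padicValNat_not_dvd (p := 2) hk0.ne'
  have h := NrCard_sub_SbarCard_of_odd hm hodd (hr.trans_eq hn_eq.symm)
  rwa [hn_eq, hk_eq] at h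

/-- When `n, k` are even, `0 < k < n`, `ν₂(n) ≥ ν₂(k) = m` and `ν₂(k) - ν₂(r) ≤ 1`
(with `ν₂(0) = ∞`), the difference `|Nᵣ(n,k)| - |S̄ᵣ(n,k)|` equals
`± |Nᵣ(n/2^m, k/2^m)|`, the sign being `-1` exactly when `ν₂(r) = m - 1`. -/
theorem Nr_sub_Sbar (n k r : ℕ) (hr : r < n) (hk0 : 0 < k) (hkn : k < n)
    (hne : Even n) (hke : Even k)
    (hmn : padicValNat 2 k ≤ padicValNat 2 n)
    (hcond : r = 0 ∨ padicValNat 2 k ≤ padicValNat 2 r + 1) :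
    (NrCard n k r : ℤ) - SbarCard n k r =
      (if r ≠ 0 ∧ padicValNat 2 r = padicValNat 2 k - 1 then (-1 : ℤ) else 1) *
        NrCard (n / 2 ^ padicValNat 2 k) (k / 2 ^ padicValNat 2 k) r := by
  have hm : padicValNat 2 k ≠ 0 := (dvd_iff_padicValNat_ne_zero hk0.ne').1 hke.two_dvd
  rw [Nr_sub_Sbar_general n k r hr hk0 hke hmn, ite_two_pow_dvd_eq_of_le_padicValNat_succ hm hcond]
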